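/- Let G ↷ X be an expansive action with the topological Markov property. Let k ∈ ℕ and (x₁,…,x_k,x_{k+1}) ∈ X^{k+1} be such that (x₁,…,x_k) is an orbit IE-tuple and (x_k,x_{k+1}) is an asymptotic pair. Then (x₁,…,x_k,x_{k+1}) is an orbit IE-tuple. -/

import Mathlib

open Pointwise

/-- Supremum over `g ∈ K` of `ρ (g • x) (g • y)`. -/
noncomputable def supOf {G X : Type*} [SMul G X] (ρ : X → X → ℝ) (K : Set G) (x y : X) : ℝ :=
  ⨆ g : K, ρ ((g : G) • x) ((g : G) • y)

/-- `d_K(x,y) = sup_{g ∈ K} d(g x, g y)`. -/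
noncomputable def supD {G X : Type*} [SMul G X] [PseudoMetricSpace X] (K : Set G) (x y : X) : ℝ :=
  supOf dist K x y

/-- `B` is an `(ε,δ)`-memory set for `A`. -/
def IsMemorySet (G X : Type*) [SMul G X] [PseudoMetricSpace X] (ε δ : ℝ)
    (A B : Finset G) : Prop :=
  (A : Set G) ⊆ (B : Set G) ∧
    ∀ x y : X, supD ((B : Set G) \ (A : Set G)) x y ≤ δ →
      ∃ z : X, supD (B : Set G) x z ≤ ε ∧ supD (Set.univ \ (A : Set G)) y z ≤ ε

/-- The topological Markov property. -/
def TMP (G X : Type*) [SMul G X] [PseudoMetricSpace X] : Prop :=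
  ∀ ε > (0 : ℝ), ∃ δ > (0 : ℝ), ∀ A : Finset G, ∃ B : Finset G, IsMemorySet G X ε δ A B

/-- The strong topological Markov property. -/
def StrongTMP (G X : Type*) [Group G] [DecidableEq G] [MulAction G X]
    [PseudoMetricSpace X] : Prop :=
  ∀ ε > (0 : ℝ), ∃ δ > (0 : ℝ), ∃ F : Finset G, (1 : G) ∈ F ∧
    ∀ A : Finset G, IsMemorySet G X ε δ A (F * A)

/-- `V` is `B`-separated. -/
def Separated {G : Type*} [Mul G] (B V : Set G) : Prop :=
  ∀ v₁ ∈ V, ∀ v₂ ∈ V, v₁ ≠ v₂ → Disjoint (B * ({v₁} : Set G)) (B * ({v₂} : Set G))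

/-- `B` is a uniform `(ε,δ)`-memory set for `A`. -/
def IsUniformMemorySet (G X : Type*) [Group G] [MulAction G X] [PseudoMetricSpace X]
    (ε δ : ℝ) (A B : Finset G) : Prop :=
  IsMemorySet G X ε δ A B ∧
    ∀ V : Finset G, Separated (B : Set G) (V : Set G) →
      ∀ (xv : G → X) (y : X),
        (∀ v ∈ V, supD (((B : Set G) \ (A : Set G)) * ({v} : Set G)) (xv v) y ≤ δ) →
        ∃ z : X, (∀ v ∈ V, supD ((B : Set G) * ({v} : Set G)) z (xv v) ≤ ε) ∧
          supD (Set.univ \ ((A : Set G) * (V : Set G))) z y ≤ ε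

/-- The uniform topological Markov property. -/
def UniformTMP (G X : Type*) [Group G] [MulAction G X] [PseudoMetricSpace X] : Prop :=
  ∀ ε > (0 : ℝ), ∃ δ > (0 : ℝ), ∀ A : Finset G, ∃ B : Finset G,
    IsUniformMemorySet G X ε δ A B

/-- The uniform strong topological Markov property. -/
def UniformStrongTMP (G X : Type*) [Group G] [DecidableEq G] [MulAction G X]
    [PseudoMetricSpace X] : Prop :=
  ∀ ε > (0 : ℝ), ∃ δ > (0 : ℝ), ∃ F : Finset G, (1 : G) ∈ F ∧
    ∀ A : Finset G, IsUniformMemorySet G X ε δ A (F * A)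

/-- Expansivity of the action. -/
def Expansive (G X : Type*) [SMul G X] [PseudoMetricSpace X] : Prop :=
  ∃ c > (0 : ℝ), ∀ x y : X, x ≠ y → ∃ g : G, dist (g • x) (g • y) > c

/-- `(x,y)` is an asymptotic pair. -/
def Asymptotic (G : Type*) {X : Type*} [SMul G X] [PseudoMetricSpace X] (x y : X) : Prop :=
  ∀ ε > (0 : ℝ), ∃ F : Finset G, ∀ g ∉ F, dist (g • x) (g • y) ≤ ε

/-- `(S,δ)` pseudo-orbit. -/
def IsPseudoOrbit {G X : Type*} [Mul G] [SMul G X] [PseudoMetricSpace X]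
    (S : Finset G) (δ : ℝ) (w : G → X) : Prop :=
  ∀ s ∈ S, ∀ g : G, dist (s • w g) (w (s * g)) < δ

/-- `w` is `ε`-traced by `x`. -/
def Traces {G X : Type*} [SMul G X] [PseudoMetricSpace X] (ε : ℝ) (x : X) (w : G → X) : Prop :=
  ∀ g : G, dist (g • x) (w g) ≤ ε

/-- Pseudo-orbit tracing property. -/
def POTP (G X : Type*) [Mul G] [SMul G X] [PseudoMetricSpace X] : Prop :=
  ∀ ε > (0 : ℝ), ∃ δ > (0 : ℝ), ∃ S : Finset G, ∀ w : G → X,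
    IsPseudoOrbit S δ w → ∃ x : X, Traces ε x w

/-- `J` is an independence set for the tuple `U`. -/
def IndepSet {G X : Type*} [SMul G X] {n : ℕ} (U : Fin n → Set X) (J : Set G) : Prop :=
  ∀ I : Finset G, (I : Set G) ⊆ J → I.Nonempty → ∀ φ : G → Fin n,
    (⋂ s ∈ I, (fun x : X => s • x) ⁻¹' U (φ s)).Nonempty

/-- The tuple `U` has positive independence density. -/
def PosIndepDensity (G : Type*) {X : Type*} [SMul G X] {n : ℕ} (U : Fin n → Set X) : Prop :=
  ∃ q > (0 : ℝ), ∀ F : Finset G, ∃ J : Finset G, J ⊆ F ∧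
    q * (F.card : ℝ) ≤ (J.card : ℝ) ∧ IndepSet U (J : Set G)

/-- Orbit IE-tuple. -/
def IETuple (G : Type*) {X : Type*} [SMul G X] [TopologicalSpace X] {n : ℕ}
    (x : Fin n → X) : Prop :=
  ∀ U : Fin n → Set X, (∀ i, IsOpen (U i)) → (∀ i, x i ∈ U i) → PosIndepDensity G U

/-- Minimality of the action. -/
def MinimalAction (G X : Type*) [SMul G X] [TopologicalSpace X] : Prop :=
  ∀ Y : Set X, IsClosed Y → (∀ g : G, ∀ y ∈ Y, g • y ∈ Y) → Y.Nonempty → Y = Set.univ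

/-- Følner sequence. -/
def FolnerSeq (G : Type*) [Group G] [DecidableEq G] (F : ℕ → Finset G) : Prop :=
  (∀ n, (F n).Nonempty) ∧
    ∀ K : Finset G, Filter.Tendsto
      (fun n => ((symmDiff (K * F n) (F n)).card : ℝ) / ((F n).card : ℝ))
      Filter.atTop (nhds 0)

/-!
Expansivity upgrades the TMP to the uniform TMP. Patterns are glued one at a time; each gluing
worsens the precision from `ε` to `3 * ε`, but agreement up to the expansivity constant on a fixed
finite set forces agreement up to `ε / 2` at the identity, so expansivity restores the precision `ε`
and the errors do not accumulate.

Suppose `y i` is asymptotic to `x (σ i)` for every `i`, with close agreement outside a finite set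
`A`, and let `B` be a uniform memory set for `A`. An independence set for small neighbourhoods of
the points of `x` contains a `B`-separated subset of proportional size. If `w` follows the pattern
`σ ∘ φ` of points of `x` on a finite part `I` of that subset, then each `s⁻¹ • y (φ s)`, `s ∈ I`,
agrees with `w` on `(B \ A) s`, so all of them can be glued into `w` at once, which realizes the
pattern `φ` of points of `y`.
-/

section supD

variable {G X : Type*} [SMul G X] [PseudoMetricSpace X] [BoundedSpace X]

theorem supD_le_iff {K : Set G} {x y : X} {r : ℝ} (hr : 0 ≤ r) :
    supD K x y ≤ r ↔ ∀ g ∈ K, dist (g • x) (g • y) ≤ r := by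
  have hbdd : BddAbove (Set.range fun g : K => dist ((g : G) • x) ((g : G) • y)) := by
    refine ⟨Metric.diam (Set.univ : Set X), ?_⟩
    rintro _ ⟨g, rfl⟩
    exact Metric.dist_le_diam_of_mem (Bornology.IsBounded.all _) trivial trivial
  exact ⟨fun h g hg => (le_ciSup hbdd ⟨g, hg⟩).trans h, fun h => Real.iSup_le (fun g => h g g.2) hr⟩

theorem isMemorySet_iff {ε δ : ℝ} (hε : 0 ≤ ε) (hδ : 0 ≤ δ) {A B : Finset G} :
    IsMemorySet G X ε δ A B ↔ A ⊆ B ∧ ∀ x y : X,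
      (∀ b ∈ B, b ∉ A → dist (b • x) (b • y) ≤ δ) →
      ∃ z : X, (∀ b ∈ B, dist (b • x) (b • z) ≤ ε) ∧ ∀ g ∉ A, dist (g • y) (g • z) ≤ ε := by
  simp only [IsMemorySet, supD_le_iff hε, supD_le_iff hδ, Finset.coe_subset, Set.mem_sdiff,
    Finset.mem_coe, Set.mem_univ, true_and, and_imp]

end supD

theorem IsMemorySet.exists_translate {G X : Type*} [Group G] [MulAction G X]
    [PseudoMetricSpace X] [BoundedSpace X] {ε δ : ℝ} {A B : Finset G}
    (h : IsMemorySet G X ε δ A B) (hε : 0 ≤ ε) (hδ : 0 ≤ δ) (v : G) {x y : X}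
    (hxy : ∀ b ∈ B, b ∉ A → dist ((b * v) • x) ((b * v) • y) ≤ δ) :
    ∃ z : X, (∀ b ∈ B, dist ((b * v) • x) ((b * v) • z) ≤ ε) ∧
      ∀ g ∉ (A : Set G) * {v}, dist (g • y) (g • z) ≤ ε := by
  obtain ⟨z, hzx, hzy⟩ := ((isMemorySet_iff hε hδ).1 h).2 (v • x) (v • y)
    (by simpa only [mul_smul] using hxy)
  refine ⟨v⁻¹ • z, fun b hb => by simpa [mul_smul] using hzx b hb, fun g hg => ?_⟩
  have hgA : g * v⁻¹ ∉ A := fun hA => hg ⟨g * v⁻¹, hA, v, rfl, inv_mul_cancel_right g v⟩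
  simpa [mul_smul] using hzy (g * v⁻¹) hgA

section Separated

variable {G : Type*} {B V W : Set G}

theorem Separated.mono [Mul G] (h : Separated B V) (hWV : W ⊆ V) : Separated B W :=
  fun v hv w hw => h v (hWV hv) w (hWV hw)

theorem Separated.eq_of_mul_eq_mul [Mul G] (h : Separated B V) {v w b b' : G} (hv : v ∈ V)
    (hw : w ∈ V) (hb : b ∈ B) (hb' : b' ∈ B) (heq : b * v = b' * w) : v = w := by
  by_contra hne
  exact Set.disjoint_left.1 (h v hv w hw hne) ⟨b, hb, v, rfl, rfl⟩ ⟨b', hb', w, rfl, heq.symm⟩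

theorem Separated.mul_notMem_mul [Mul G] (h : Separated B V) {A : Set G} (hAB : A ⊆ B)
    (hWV : W ⊆ V) {v b : G} (hv : v ∈ V) (hvW : v ∉ W) (hb : b ∈ B) : b * v ∉ A * W := by
  rintro ⟨a, ha, w, hw, heq⟩
  obtain rfl := h.eq_of_mul_eq_mul (hWV hw) hv (hAB ha) hb heq
  exact hvW hw

variable [Group G]

theorem Separated.insert {t : G} (h : Separated B V) (ht : t ∉ B⁻¹ * B * V) :
    Separated B (insert t V) := by
  refine Set.PairwiseDisjoint.insert (f := fun v => B * ({v} : Set G)) h fun v hv _ => ?_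
  rw [Set.disjoint_left]
  rintro _ ⟨b, hb, _, rfl, rfl⟩ ⟨b', hb', _, rfl, heq⟩
  refine ht ⟨b⁻¹ * b', Set.mul_mem_mul (Set.inv_mem_inv.2 hb) hb', _, hv, ?_⟩
  simpa only [mul_assoc, inv_mul_eq_iff_eq_mul] using heq

theorem exists_separated_subset [DecidableEq G] {B : Finset G} (hB : B.Nonempty) (J : Finset G) :
    ∃ V ⊆ J, Separated (B : Set G) (V : Set G) ∧ J ⊆ B⁻¹ * B * V := by
  induction J using Finset.induction_on with
  | empty => exact ⟨∅, by simp [Separated]⟩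
  | insert t J _ ih =>
    obtain ⟨V, hVJ, hsep, hcover⟩ := ih
    by_cases ht : t ∈ B⁻¹ * B * V
    · exact ⟨V, hVJ.trans (Finset.subset_insert t J), hsep, Finset.insert_subset ht hcover⟩
    · obtain ⟨b, hb⟩ := hB
      have h_one : (1 : G) ∈ B⁻¹ * B := by
        simpa using Finset.mul_mem_mul (Finset.inv_mem_inv hb) hb
      refine ⟨insert t V, Finset.insert_subset_insert t hVJ, ?_, Finset.insert_subset ?_ ?_⟩
      · rw [Finset.coe_insert]
        exact hsep.insert (by exact_mod_cast ht)
      · simpa using Finset.mul_mem_mul h_one (Finset.mem_insert_self t V)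
      · exact hcover.trans (Finset.mul_subset_mul_left (Finset.subset_insert t V))

end Separated

theorem Expansive.exists_finset_dist_le {G X : Type*} [One G] [SMul G X]
    [PseudoMetricSpace X] [CompactSpace X] [ContinuousConstSMul G X] (h : Expansive G X) :
    ∃ c > (0 : ℝ), ∀ η > 0, ∃ F : Finset G, 1 ∈ F ∧
      ∀ x y : X, (∀ g ∈ F, dist (g • x) (g • y) ≤ c) → dist x y ≤ η := by
  classical
  obtain ⟨c, hc, hexp⟩ := h
  refine ⟨c, hc, fun η hη => ?_⟩
  have hfar : IsCompact {p : X × X | η ≤ dist p.1 p.2} :=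
    (isClosed_le continuous_const continuous_dist).isCompact
  obtain ⟨F, hF⟩ := hfar.elim_finite_subcover
    (fun g : G => {p : X × X | c < dist (g • p.1) (g • p.2)})
    (fun g => isOpen_lt continuous_const (by fun_prop))
    (fun p hp => Set.mem_iUnion.2 (hexp p.1 p.2 fun heq => by
      simp only [Set.mem_ofPred_eq, heq, dist_self] at hp
      exact hη.not_ge hp))
  refine ⟨insert 1 F, Finset.mem_insert_self 1 F, fun x y hxy => ?_⟩
  by_contra! hlt
  obtain ⟨g, hgF, hg⟩ := Set.mem_iUnion₂.1 (hF (show (x, y) ∈ _ from hlt.le))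
  exact (hxy g (Finset.mem_insert_of_mem hgF)).not_gt hg

/-- `z` agrees up to `η` with `xv v` on each translate `B v`, `v ∈ V`, and with `y` outside `A V`:
the conclusion of the uniform TMP, written pointwise. -/
def IsGluing {G X : Type*} [Mul G] [SMul G X] [PseudoMetricSpace X] (η : ℝ) (A B V : Set G)
    (xv : G → X) (y z : X) : Prop :=
  (∀ v ∈ V, ∀ b ∈ B, dist ((b * v) • z) ((b * v) • xv v) ≤ η) ∧
    ∀ g ∉ A * V, dist (g • z) (g • y) ≤ η

section Gluing

variable {G X : Type*} [Group G] [MulAction G X] [PseudoMetricSpace X]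

theorem isUniformMemorySet_iff [BoundedSpace X] {ε δ : ℝ} (hε : 0 ≤ ε) (hδ : 0 ≤ δ)
    {A B : Finset G} :
    IsUniformMemorySet G X ε δ A B ↔ A ⊆ B ∧ ∀ V : Finset G, Separated (B : Set G) (V : Set G) →
      ∀ (xv : G → X) (y : X),
        (∀ v ∈ V, ∀ b ∈ B, b ∉ A → dist ((b * v) • xv v) ((b * v) • y) ≤ δ) →
        ∃ z : X, IsGluing ε A B V xv y z := by
  simp only [IsUniformMemorySet, isMemorySet_iff hε hδ, supD_le_iff hε, supD_le_iff hδ, IsGluing,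
    Set.mul_singleton, Set.forall_mem_image, Set.mem_sdiff, Finset.mem_coe, Set.mem_univ, true_and,
    and_imp]
  refine ⟨fun h => ⟨h.1.1, h.2⟩, fun h => ⟨⟨h.1, fun x y hxy => ?_⟩, h.2⟩⟩
  obtain ⟨z, hzx, hzy⟩ := h.2 {1} (by simp [Separated]) (fun _ => x) y (by simpa using hxy)
  exact ⟨z, by simpa [dist_comm] using hzx, by simpa [dist_comm] using hzy⟩

variable {A B V W : Set G} {xv : G → X} {y z : X}

theorem IsGluing.mono {η η' : ℝ} (h : IsGluing η A B V xv y z) (hη : η ≤ η') :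
    IsGluing η' A B V xv y z :=
  ⟨fun v hv b hb => (h.1 v hv b hb).trans hη, fun g hg => (h.2 g hg).trans hη⟩

theorem IsGluing.dist_near_or_far {F : Set G} {c δ : ℝ} (h : IsGluing c A B V xv y z)
    (hF_one : 1 ∈ F) (hF : ∀ x y : X, (∀ g ∈ F, dist (g • x) (g • y) ≤ c) → dist x y ≤ δ)
    (hFA : F * (F⁻¹ * A) ⊆ B) (g : G) :
    (∃ v ∈ V, ∃ b ∈ B, b * v = g ∧ dist (g • z) (g • xv v) ≤ δ) ∨
      (g ∉ A * V ∧ dist (g • z) (g • y) ≤ δ) := by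
  by_cases hg : g ∈ F⁻¹ * A * V
  · obtain ⟨b, hb, v, hv, rfl⟩ := hg
    have hFb : ∀ f ∈ F, f * b ∈ B := fun f hf => hFA (Set.mul_mem_mul hf hb)
    refine .inl ⟨v, hv, b, by simpa using hFb 1 hF_one, rfl, hF _ _ fun f hf => ?_⟩
    simpa only [mul_smul] using h.1 v hv (f * b) (hFb f hf)
  · have hFg : ∀ f ∈ F, f * g ∉ A * V := by
      rintro f hf ⟨a, ha, v, hv, heq⟩
      refine hg ⟨f⁻¹ * a, Set.mul_mem_mul (Set.inv_mem_inv.2 hf) ha, v, hv, ?_⟩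
      simpa only [mul_assoc, inv_mul_eq_iff_eq_mul] using heq
    refine .inr ⟨by simpa using hFg 1 hF_one, hF _ _ fun f hf => ?_⟩
    simpa only [mul_smul] using h.2 (f * g) (hFg f hf)

theorem IsGluing.improve {F : Set G} {c δ : ℝ} (h : IsGluing c A B V xv y z)
    (hF_one : 1 ∈ F) (hF : ∀ x y : X, (∀ g ∈ F, dist (g • x) (g • y) ≤ c) → dist x y ≤ δ)
    (hFA : F * (F⁻¹ * A) ⊆ B) (hsep : Separated B V)
    (hxv : ∀ v ∈ V, ∀ b ∈ B, b ∉ A → dist ((b * v) • xv v) ((b * v) • y) ≤ δ) :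
    IsGluing (2 * δ) A B V xv y z := by
  have hnear_or_far := h.dist_near_or_far hF_one hF hFA
  refine ⟨fun v hv b hb => ?_, fun g hg => ?_⟩
  · rcases hnear_or_far (b * v) with ⟨w, hw, b', hb', heq, hnear⟩ | ⟨hbv, hfar⟩
    · obtain rfl := hsep.eq_of_mul_eq_mul hw hv hb' hb heq
      linarith [dist_nonneg.trans hnear]
    · have hby := hxv v hv b hb fun hbA => hbv (Set.mul_mem_mul hbA hv)
      linarith [dist_triangle_right ((b * v) • z) ((b * v) • xv v) ((b * v) • y)]
  · rcases hnear_or_far g with ⟨v, hv, b, hb, rfl, hnear⟩ | ⟨-, hfar⟩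
    · have hby := hxv v hv b hb fun hbA => hg (Set.mul_mem_mul hbA hv)
      linarith [dist_triangle ((b * v) • z) ((b * v) • xv v) ((b * v) • y)]
    · linarith [dist_nonneg.trans hfar]

theorem IsGluing.exists_insert [BoundedSpace X] {A B₀ : Finset G} {ε δ₀ : ℝ} {v : G}
    (h : IsGluing ε A B W xv y z) (hε : 0 ≤ ε) (hδ₀ : 0 ≤ δ₀) (hmem : IsMemorySet G X ε δ₀ A B₀)
    (hB₀ : (B₀ : Set G) ⊆ B) (hsep : Separated B (insert v W)) (hvW : v ∉ W)
    (hxv : ∀ b ∈ B, b ∉ A → dist ((b * v) • xv v) ((b * v) • y) ≤ ε)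
    (hxz : ∀ b ∈ B₀, b ∉ A → dist ((b * v) • xv v) ((b * v) • z) ≤ δ₀) :
    ∃ z', IsGluing (3 * ε) A B (insert v W) xv y z' := by
  have hAB : (A : Set G) ⊆ B := hmem.1.trans hB₀
  obtain ⟨z', hxz', hzz'⟩ := hmem.exists_translate hε hδ₀ v hxz
  refine ⟨z', ?_, fun g hg => ?_⟩
  · rintro w (rfl | hw) b hb
    · by_cases hbA : b ∈ A
      · linarith [hxz' b (hmem.1 hbA), dist_comm ((b * w) • z') ((b * w) • xv w)]
      · have hz'z := hzz' (b * w) (by simpa using hbA)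
        have hzy := h.2 (b * w)
          (hsep.mul_notMem_mul hAB (W.subset_insert w) (W.mem_insert w) hvW hb)
        have htriangle := dist_triangle4_right ((b * w) • z') ((b * w) • xv w) ((b * w) • z)
          ((b * w) • y)
        linarith [hxv b hb hbA, dist_comm ((b * w) • z') ((b * w) • z)]
    · have hwv : w ∉ ({v} : Set G) := by
        rintro rfl
        exact hvW hw
      have hz'z := hzz' (b * w) (hsep.mul_notMem_mul hAB
        (Set.singleton_subset_iff.2 (W.mem_insert v)) (W.mem_insert_of_mem v hw) hwv hb)
      linarith [h.1 w hw b hb, dist_triangle_left ((b * w) • z') ((b * w) • xv w) ((b * w) • z)]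
  · have hz'z := hzz' g fun hgv => hg (Set.mul_subset_mul_left (by simp) hgv)
    have hzy := h.2 g fun hgW => hg (Set.mul_subset_mul_left (W.subset_insert v) hgW)
    linarith [dist_triangle_left (g • z') (g • y) (g • z)]

theorem exists_isGluing [BoundedSpace X] {F : Set G} {A B₀ : Finset G} {c ε δ δ₀ : ℝ}
    (hδ : 0 ≤ δ) (hδε : 2 * δ ≤ ε) (hδδ₀ : 2 * δ ≤ δ₀) (hεc : 3 * ε ≤ c) (hF_one : 1 ∈ F)
    (hF : ∀ x y : X, (∀ g ∈ F, dist (g • x) (g • y) ≤ c) → dist x y ≤ δ)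
    (hmem : IsMemorySet G X ε δ₀ A B₀) (hFA : F * (F⁻¹ * A) ⊆ B) (hFB₀ : F * B₀ ⊆ B)
    (V : Finset G) (hsep : Separated B V)
    (hxv : ∀ v ∈ V, ∀ b ∈ B, b ∉ A → dist ((b * v) • xv v) ((b * v) • y) ≤ δ) :
    ∃ z, IsGluing ε A B V xv y z := by
  classical
  have hε : 0 ≤ ε := by linarith
  have hB₀ : (B₀ : Set G) ⊆ B := (Set.subset_mul_right _ hF_one).trans hFB₀
  induction V using Finset.induction_on with
  | empty => exact ⟨y, by simp, by simpa⟩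
  | insert v W hvW ih =>
    rw [Finset.coe_insert] at hsep
    obtain ⟨z, hz⟩ := ih (hsep.mono (Set.subset_insert v W))
      fun w hw => hxv w (Finset.mem_insert_of_mem hw)
    have hxv_v := hxv v (Finset.mem_insert_self v W)
    have hzy : ∀ b ∈ B, dist ((b * v) • z) ((b * v) • y) ≤ ε := fun b hb =>
      hz.2 (b * v) (hsep.mul_notMem_mul (hmem.1.trans hB₀) (Set.subset_insert v W)
        (Set.mem_insert v W) hvW hb)
    have hzy_fine : ∀ b ∈ B₀, dist ((b * v) • z) ((b * v) • y) ≤ δ := fun b hb =>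
      hF _ _ fun f hf => by
        have hzy_fb := hzy (f * b) (hFB₀ (Set.mul_mem_mul hf hb))
        simp only [mul_smul] at hzy_fb ⊢
        linarith
    obtain ⟨z', hz'⟩ := hz.exists_insert hε (by linarith) hmem hB₀ hsep hvW
      (fun b hb hbA => by linarith [hxv_v b hb hbA]) fun b hb hbA => by
        linarith [hxv_v b (hB₀ hb) hbA, hzy_fine b hb,
          dist_triangle_right ((b * v) • xv v) ((b * v) • z) ((b * v) • y)]
    have hz'_improved := (hz'.mono hεc).improve hF_one hF hFA hsep (by simpa using hxv)
    exact ⟨z', by simpa using hz'_improved.mono hδε⟩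

end Gluing

theorem Expansive.uniformTMP {G X : Type*} [Group G] [PseudoMetricSpace X] [CompactSpace X]
    [MulAction G X] [ContinuousConstSMul G X] (hexp : Expansive G X) (htmp : TMP G X) :
    UniformTMP G X := by
  classical
  obtain ⟨c, hc, hscale⟩ := hexp.exists_finset_dist_le
  intro ε₀ hε₀
  obtain ⟨ε, hε, hεε₀, hεc⟩ : ∃ ε > 0, ε ≤ ε₀ ∧ 3 * ε ≤ c :=
    ⟨min ε₀ (c / 3), by positivity, min_le_left _ _, by linarith [min_le_right ε₀ (c / 3)]⟩
  obtain ⟨δ₀, hδ₀, hmem⟩ := htmp ε hε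
  obtain ⟨δ, hδ, hδε, hδδ₀⟩ : ∃ δ > 0, 2 * δ ≤ ε ∧ 2 * δ ≤ δ₀ :=
    ⟨min ε δ₀ / 2, by positivity, by linarith [min_le_left ε δ₀], by linarith [min_le_right ε δ₀]⟩
  obtain ⟨F, hF_one, hF⟩ := hscale δ hδ
  refine ⟨δ, hδ, fun A => ?_⟩
  obtain ⟨B₀, hB₀⟩ := hmem A
  have hAB₀ : A ⊆ B₀ := by exact_mod_cast hB₀.1
  refine ⟨F * (F⁻¹ * A) ∪ F * B₀, (isUniformMemorySet_iff hε₀.le hδ.le).2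
    ⟨(hAB₀.trans (Finset.subset_mul_right B₀ hF_one)).trans Finset.subset_union_right,
      fun V hsep xv y hxv => ?_⟩⟩
  obtain ⟨z, hz⟩ := exists_isGluing (F := F) hδ.le hδε hδδ₀ hεc hF_one hF hB₀
    (by push_cast; exact Set.subset_union_left) (by push_cast; exact Set.subset_union_right)
    V hsep hxv
  exact ⟨z, hz.mono hεε₀⟩

section Independence

open scoped Topology

variable {G X : Type*}

theorem PosIndepDensity.of_separated [Group G] [SMul G X] {n m : ℕ} {U : Fin n → Set X}
    {W : Fin m → Set X} (hU : PosIndepDensity G U) {B : Finset G} (hB : B.Nonempty)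
    (h : ∀ V : Finset G, Separated (B : Set G) (V : Set G) →
      IndepSet U (V : Set G) → IndepSet W (V : Set G)) :
    PosIndepDensity G W := by
  classical
  obtain ⟨q, hq, hJ⟩ := hU
  have hN : 0 < (B⁻¹ * B).card := (hB.inv.mul hB).card_pos
  refine ⟨q / (B⁻¹ * B).card, by positivity, fun F => ?_⟩
  obtain ⟨J, hJF, hJcard, hJindep⟩ := hJ F
  obtain ⟨V, hVJ, hsep, hcover⟩ := exists_separated_subset hB J
  refine ⟨V, hVJ.trans hJF, ?_,
    h V hsep fun I hI => hJindep I (hI.trans (Finset.coe_subset.2 hVJ))⟩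
  have hcard : (J.card : ℝ) ≤ (B⁻¹ * B).card * V.card := by
    exact_mod_cast (Finset.card_le_card hcover).trans Finset.card_mul_le
  rw [div_mul_eq_mul_div, div_le_iff₀' (by exact_mod_cast hN)]
  exact hJcard.trans hcard

theorem IsUniformMemorySet.indepSet_closedBall [Group G] [MulAction G X] [PseudoMetricSpace X]
    [BoundedSpace X] {ε δ : ℝ} {A B V : Finset G} (h : IsUniformMemorySet G X ε δ A B)
    (hε : 0 ≤ ε) (hδ : 0 ≤ δ) (hB : 1 ∈ B) {n m : ℕ} {U : Fin n → Set X} {y : Fin m → X}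
    {σ : Fin m → Fin n}
    (hUy : ∀ i, ∀ w ∈ U (σ i), ∀ b ∈ B, b ∉ A → dist (b • y i) (b • w) ≤ δ)
    (hsep : Separated (B : Set G) (V : Set G)) (hV : IndepSet U (V : Set G)) :
    IndepSet (fun i => Metric.closedBall (y i) ε) (V : Set G) := by
  intro I hIV hI φ
  obtain ⟨w, hw⟩ := hV I hIV hI (σ ∘ φ)
  simp only [Set.mem_iInter, Set.mem_preimage] at hw
  obtain ⟨z, hz, -⟩ := ((isUniformMemorySet_iff hε hδ).1 h).2 I (hsep.mono hIV)
    (fun s => s⁻¹ • y (φ s)) w fun s hs b hb hbA => by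
      simpa [mul_smul] using hUy (φ s) (s • w) (hw s hs) b hb hbA
  refine ⟨z, Set.mem_iInter₂.2 fun s hs => ?_⟩
  simpa using hz s hs 1 hB

theorem PosIndepDensity.mono [SMul G X] {n : ℕ} {U W : Fin n → Set X} (h : PosIndepDensity G U)
    (hUW : ∀ i, U i ⊆ W i) : PosIndepDensity G W := by
  obtain ⟨q, hq, hJ⟩ := h
  refine ⟨q, hq, fun F => ?_⟩
  obtain ⟨J, hJF, hcard, hindep⟩ := hJ F
  exact ⟨J, hJF, hcard, fun I hIJ hI φ => (hindep I hIJ hI φ).mono <|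
    Set.iInter₂_mono fun s _ => Set.preimage_mono (hUW (φ s))⟩

theorem ieTuple_of_closedBall [SMul G X] [PseudoMetricSpace X] {n : ℕ} {x : Fin n → X}
    (h : ∀ ε > 0, PosIndepDensity G fun i => Metric.closedBall (x i) ε) : IETuple G x := by
  intro U hU hx
  have hsmall : ∀ᶠ ε in 𝓝[>] (0 : ℝ), ∀ i, Metric.closedBall (x i) ε ⊆ U i :=
    Filter.eventually_all.2 fun i =>
      (eventually_closedBall_subset ((hU i).mem_nhds (hx i))).filter_mono nhdsWithin_le_nhds
  obtain ⟨ε, hεU, hε⟩ := (hsmall.and self_mem_nhdsWithin).exists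
  exact (h ε hε).mono hεU

theorem Asymptotic.refl [SMul G X] [PseudoMetricSpace X] (x : X) : Asymptotic G x x :=
  fun _ hε => ⟨∅, fun g _ => (dist_self (g • x)).trans_le hε.le⟩

theorem exists_finset_dist_le_of_asymptotic [SMul G X] [PseudoMetricSpace X] {ι : Type*}
    [Finite ι] {x y : ι → X} (h : ∀ i, Asymptotic G (x i) (y i)) {ε : ℝ} (hε : 0 < ε) :
    ∃ A : Finset G, ∀ i, ∀ g ∉ A, dist (g • x i) (g • y i) ≤ ε := by
  classical
  cases nonempty_fintype ι
  choose A hA using fun i => h i ε hε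
  exact ⟨Finset.univ.biUnion A, fun i g hg => hA i g fun hgA =>
    hg (Finset.mem_biUnion.2 ⟨i, Finset.mem_univ i, hgA⟩)⟩

end Independence

theorem stmt10_general {G X : Type*} [Group G] [PseudoMetricSpace X] [CompactSpace X]
    [MulAction G X] [ContinuousConstSMul G X] (hexp : Expansive G X) (htmp : TMP G X) {n m : ℕ}
    {x : Fin n → X} (hIE : IETuple G x) {y : Fin m → X} {σ : Fin m → Fin n}
    (hasym : ∀ i, Asymptotic G (x (σ i)) (y i)) : IETuple G y := by
  classical
  refine ieTuple_of_closedBall fun ε hε => ?_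
  obtain ⟨δ, hδ, hmem⟩ := hexp.uniformTMP htmp ε hε
  obtain ⟨A, hA⟩ := exists_finset_dist_le_of_asymptotic hasym (half_pos hδ)
  obtain ⟨B, hB⟩ := hmem (insert 1 A)
  have hB_one : 1 ∈ B := hB.1.1 (Finset.mem_insert_self 1 A)
  let U (j : Fin n) : Set X := {w | ∀ b ∈ B, dist (b • w) (b • x j) < δ / 2}
  have hU_open (j : Fin n) : IsOpen (U j) := by
    simp only [U, Set.ofPred_forall]
    exact isOpen_biInter_finset fun b _ => isOpen_lt (by fun_prop) continuous_const
  have hU : PosIndepDensity G U :=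
    hIE U hU_open fun j b _ => (dist_self (b • x j)).trans_lt (half_pos hδ)
  have hUy : ∀ i, ∀ w ∈ U (σ i), ∀ b ∈ B, b ∉ insert 1 A → dist (b • y i) (b • w) ≤ δ := by
    intro i w hw b hb hbA
    linarith [hw b hb, hA i b fun h => hbA (Finset.mem_insert_of_mem h),
      dist_triangle_right (b • y i) (b • w) (b • x (σ i)), dist_comm (b • x (σ i)) (b • y i)]
  exact hU.of_separated ⟨1, hB_one⟩ fun V hsep hV =>
    hB.indepSet_closedBall hε.le hδ.le hB_one hUy hsep hV

/-- Let `G ↷ X` be an expansive action with the TMP.  If `(x₁,…,x_k)` is an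
orbit IE-tuple and `(x_k, y)` is an asymptotic pair, then `(x₁,…,x_k,y)` is an orbit
IE-tuple. -/
theorem stmt10 (G X : Type*) [Group G] [Countable G] [Infinite G]
    [MetricSpace X] [CompactSpace X] [MulAction G X]
    (hcont : ∀ g : G, Continuous fun x : X => g • x)
    (hexp : Expansive G X) (htmp : TMP G X)
    (n : ℕ) (x : Fin (n + 1) → X) (y : X)
    (hIE : IETuple G x) (hasym : Asymptotic G (x (Fin.last n)) y) :
    IETuple G (Fin.snoc x y) := by
  have : ContinuousConstSMul G X := ⟨hcont⟩
  exact stmt10_general (σ := Fin.snoc id (Fin.last n)) hexp htmp hIE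
    (Fin.lastCases (by simpa using hasym) fun i => by simpa using .refl (x i))
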